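/- arXiv:1706.00226 — 10 statements merged into one kernel-verified Lean document; each statement's English description precedes it below -/
import Mathlib

section
/- Let [v], [w] be torsion classes in R^n/H̄R^n and let v₀, v₀', w₀, w₀' ∈ R^n satisfy H̄v₀ = Δ·v = H̄v₀' and H̄w₀ = Δ·w = H̄w₀'. Then v₀ᵀ·H·w̄₀ = v₀'ᵀ·H·w̄₀' in R; in other words, the value (1/Δ²)·v₀ᵀ·H·w̄₀ ∈ Q(R) used to define λ_H([v],[w]) is independent of the choice of the lifts v₀ and w₀. -/
open Matrix
/-- The class of `v` in the cokernel of `M : Rⁿ → Rⁿ` is a torsion element. -/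
def torsionClass {R : Type*} [CommRing R] {m : Type*} [Fintype m]
    (M : Matrix m m R) (v : m → R) : Prop :=
  ∃ r : R, r ≠ 0 ∧ ∃ u : m → R, M *ᵥ u = r • v

/-- the value `v₀ᵀ · H · w̄₀` used to define `λ_H([v],[w])` is independent of the
choice of the lifts `v₀` and `w₀`. -/
theorem value_independent_of_lifts
    {R : Type*} [CommRing R] [IsDomain R] [IsNoetherianRing R] [UniqueFactorizationMonoid R]
    (σ : R →+* R) (hσ : Function.Involutive σ)
    {n : ℕ} (H : Matrix (Fin n) (Fin n) R) (hH : (H.map σ)ᵀ = H)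
    (Δ : R) (hΔ0 : Δ ≠ 0) (hΔσ : σ Δ = Δ)
    (hΔann : ∀ v : Fin n → R, torsionClass (H.map σ) v →
      ∃ v₀ : Fin n → R, (H.map σ) *ᵥ v₀ = Δ • v)
    (v w v₀ v₀' w₀ w₀' : Fin n → R)
    (hv : torsionClass (H.map σ) v) (hw : torsionClass (H.map σ) w)
    (hv₀ : (H.map σ) *ᵥ v₀ = Δ • v) (hv₀' : (H.map σ) *ᵥ v₀' = Δ • v)
    (hw₀ : (H.map σ) *ᵥ w₀ = Δ • w) (hw₀' : (H.map σ) *ᵥ w₀' = Δ • w) :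
    v₀ ⬝ᵥ (H *ᵥ (σ ∘ w₀)) = v₀' ⬝ᵥ (H *ᵥ (σ ∘ w₀')) := by
  have hT : Hᵀ = H.map σ := by
    conv_lhs => rw [← hH]
    rw [Matrix.transpose_transpose]
  have key : ∀ x : Fin n → R, H *ᵥ (σ ∘ x) = σ ∘ ((H.map σ) *ᵥ x) := by
    intro x
    funext i
    simp [Matrix.mulVec, dotProduct, map_sum, hσ _]
  have e : H *ᵥ (σ ∘ w₀) = H *ᵥ (σ ∘ w₀') := by
    rw [key, key, hw₀, hw₀']
  rw [e, Matrix.dotProduct_mulVec, Matrix.dotProduct_mulVec, ← Matrix.mulVec_transpose,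
    ← Matrix.mulVec_transpose, hT, hv₀, hv₀']
end

section
/- Let v, v' ∈ R^n represent the same torsion class of R^n/H̄R^n, say v' = v + H̄u with u ∈ R^n, and let w ∈ R^n represent a torsion class. If v₀, v₀', w₀ ∈ R^n satisfy H̄v₀ = Δ·v, H̄v₀' = Δ·v' and H̄w₀ = Δ·w, then (1/Δ²)·v₀'ᵀ·H·w̄₀ − (1/Δ²)·v₀ᵀ·H·w̄₀ ∈ R, and the analogous statement holds in the second variable. Consequently λ_H is a well-defined pairing Tor_R(R^n/H̄R^n) × Tor_R(R^n/H̄R^n) → Q(R)/R. -/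
open Matrix

/-- the value `(1/Δ²)·v₀ᵀ·H·w̄₀` is, modulo `R`, independent of the choice of the
representatives of the torsion classes, in each variable; consequently `λ_H` is well defined
as a pairing with values in `Q(R)/R`. -/
theorem lambda_well_defined
    {R : Type*} [CommRing R] [IsDomain R] [IsNoetherianRing R] [UniqueFactorizationMonoid R]
    (σ : R →+* R) (hσ : Function.Involutive σ)
    {n : ℕ} (H : Matrix (Fin n) (Fin n) R) (hH : (H.map σ)ᵀ = H)
    (Δ : R) (hΔ0 : Δ ≠ 0) (hΔσ : σ Δ = Δ)
    (hΔann : ∀ v : Fin n → R, torsionClass (H.map σ) v →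
      ∃ v₀ : Fin n → R, (H.map σ) *ᵥ v₀ = Δ • v) :
    (∀ v v' u w v₀ v₀' w₀ : Fin n → R,
      torsionClass (H.map σ) v → torsionClass (H.map σ) w →
      v' = v + (H.map σ) *ᵥ u →
      (H.map σ) *ᵥ v₀ = Δ • v → (H.map σ) *ᵥ v₀' = Δ • v' → (H.map σ) *ᵥ w₀ = Δ • w →
      ∃ r : R, algebraMap R (FractionRing R) r =
        algebraMap R (FractionRing R) (v₀' ⬝ᵥ (H *ᵥ (σ ∘ w₀))) /
          (algebraMap R (FractionRing R) Δ) ^ 2 -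
        algebraMap R (FractionRing R) (v₀ ⬝ᵥ (H *ᵥ (σ ∘ w₀))) /
          (algebraMap R (FractionRing R) Δ) ^ 2) ∧
    (∀ w w' u v w₀ w₀' v₀ : Fin n → R,
      torsionClass (H.map σ) v → torsionClass (H.map σ) w →
      w' = w + (H.map σ) *ᵥ u →
      (H.map σ) *ᵥ w₀ = Δ • w → (H.map σ) *ᵥ w₀' = Δ • w' → (H.map σ) *ᵥ v₀ = Δ • v →
      ∃ r : R, algebraMap R (FractionRing R) r =
        algebraMap R (FractionRing R) (v₀ ⬝ᵥ (H *ᵥ (σ ∘ w₀'))) /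
          (algebraMap R (FractionRing R) Δ) ^ 2 -
        algebraMap R (FractionRing R) (v₀ ⬝ᵥ (H *ᵥ (σ ∘ w₀))) /
          (algebraMap R (FractionRing R) Δ) ^ 2) := by
  have hHt : Hᵀ = H.map σ := by
    rw [← hH, transpose_transpose, hH]
  have A : ∀ x y : Fin n → R, (H.map σ) *ᵥ x = Δ • y → H *ᵥ (σ ∘ x) = Δ • (σ ∘ y) := by
    intro x y h
    funext i
    have h1 := congrArg σ (congrFun h i)
    simpa [mulVec, dotProduct, map_sum, hσ _, hΔσ] using h1
  have A' : ∀ x : Fin n → R, H *ᵥ (σ ∘ x) = σ ∘ ((H.map σ) *ᵥ x) := by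
    intro x
    funext i
    simp [mulVec, dotProduct, map_sum, hσ _]
  have B : ∀ a b : Fin n → R, a ⬝ᵥ (H *ᵥ b) = ((H.map σ) *ᵥ a) ⬝ᵥ b := by
    intro a b
    rw [dotProduct_mulVec, ← hHt, mulVec_transpose]
  have hD : (algebraMap R (FractionRing R) Δ) ≠ 0 := by
    simpa using hΔ0
  have key : ∀ r a b : R, a = b + Δ ^ 2 * r → algebraMap R (FractionRing R) r =
      algebraMap R (FractionRing R) a / (algebraMap R (FractionRing R) Δ) ^ 2 -
        algebraMap R (FractionRing R) b / (algebraMap R (FractionRing R) Δ) ^ 2 := by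
    intro r a b h
    rw [h, map_add, map_mul, map_pow]
    field_simp
    ring
  constructor
  · intro v v' u w v₀ v₀' w₀ _ _ hv' h1 h2 h3
    refine ⟨u ⬝ᵥ (σ ∘ w), key _ _ _ ?_⟩
    rw [B, B, h1, h2, hv', smul_dotProduct, smul_dotProduct, add_dotProduct, ← B, A _ _ h3,
      dotProduct_smul]
    simp only [smul_eq_mul]
    ring
  · intro w w' u v w₀ w₀' v₀ _ _ hw' h1 h2 h3
    refine ⟨v ⬝ᵥ (σ ∘ u), key _ _ _ ?_⟩
    have e : σ ∘ w' = σ ∘ w + H *ᵥ (σ ∘ u) := by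
      rw [A', hw']
      funext i
      simp
    rw [A _ _ h1, A _ _ h2, e, dotProduct_smul, dotProduct_smul, dotProduct_add, B, h3,
      smul_dotProduct]
    simp only [smul_eq_mul]
    ring
end

section
/- The pairing λ_H is hermitian: for all torsion classes [v], [w] in R^n/H̄R^n, λ_H([w],[v]) equals the image of λ_H([v],[w]) under the involution of Q(R)/R induced by the involution of Q(R). -/
open Matrix

/-- the pairing `λ_H` is hermitian: `λ_H([w],[v])` equals the image of
`λ_H([v],[w])` under the involution of `Q(R)/R` induced by the involution of `Q(R)`. -/
theorem lambda_hermitian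
    {R : Type*} [CommRing R] [IsDomain R] [IsNoetherianRing R] [UniqueFactorizationMonoid R]
    (σ : R →+* R) (hσ : Function.Involutive σ)
    (σK : FractionRing R →+* FractionRing R) (hσK : Function.Involutive σK)
    (hcompat : ∀ r : R, σK (algebraMap R (FractionRing R) r) = algebraMap R (FractionRing R) (σ r))
    {n : ℕ} (H : Matrix (Fin n) (Fin n) R) (hH : (H.map σ)ᵀ = H)
    (Δ : R) (hΔ0 : Δ ≠ 0) (hΔσ : σ Δ = Δ)
    (hΔann : ∀ v : Fin n → R, torsionClass (H.map σ) v →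
      ∃ v₀ : Fin n → R, (H.map σ) *ᵥ v₀ = Δ • v)
    (v w v₀ w₀ : Fin n → R)
    (hv : torsionClass (H.map σ) v) (hw : torsionClass (H.map σ) w)
    (hv₀ : (H.map σ) *ᵥ v₀ = Δ • v) (hw₀ : (H.map σ) *ᵥ w₀ = Δ • w) :
    ∃ r : R, algebraMap R (FractionRing R) r =
      algebraMap R (FractionRing R) (w₀ ⬝ᵥ (H *ᵥ (σ ∘ v₀))) /
        (algebraMap R (FractionRing R) Δ) ^ 2 -
      σK (algebraMap R (FractionRing R) (v₀ ⬝ᵥ (H *ᵥ (σ ∘ w₀))) /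
        (algebraMap R (FractionRing R) Δ) ^ 2) := by
  have key : σ (v₀ ⬝ᵥ (H *ᵥ (σ ∘ w₀))) = w₀ ⬝ᵥ (H *ᵥ (σ ∘ v₀)) := by
    have hij : ∀ i j, σ (H i j) = H j i := fun i j => by
      conv_rhs => rw [← hH]
      rfl
    simp only [dotProduct, mulVec, map_sum, map_mul, Function.comp, hij, hσ _, Finset.mul_sum]
    rw [Finset.sum_comm]
    refine Finset.sum_congr rfl fun i _ => Finset.sum_congr rfl fun j _ => ?_
    ring
  refine ⟨0, ?_⟩
  rw [map_div₀, map_pow, hcompat, hcompat, key, hΔσ, sub_self, map_zero]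
end

section
/- Let H be a hermitian n×n matrix over R with det(H) ≠ 0. Then the R-module R^n/H̄R^n is torsion, and the assignment (a,b) ↦ aᵀ·H⁻¹·b̄ mod R (with H⁻¹ the inverse of H over Q(R)) induces a well-defined pairing R^n/H̄R^n × R^n/H̄R^n → Q(R)/R which is sesquilinear and hermitian. -/
open Matrix

/-- The pairing `(a, b) ↦ aᵀ·H⁻¹·b̄` with values in the fraction field `Q(R)`, where the
inverse of `H` is taken over `Q(R)`. -/
noncomputable def invPairing {R : Type*} [CommRing R] [IsDomain R] {n : ℕ}
    (H : Matrix (Fin n) (Fin n) R) (σ : R →+* R) (a b : Fin n → R) : FractionRing R :=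
  (fun i => algebraMap R (FractionRing R) (a i)) ⬝ᵥ
    ((H.map (algebraMap R (FractionRing R)))⁻¹ *ᵥ
      fun i => algebraMap R (FractionRing R) (σ (b i)))

/-- if `H` is hermitian with `det H ≠ 0`, then `Rⁿ/H̄Rⁿ` is torsion, and
`(a,b) ↦ aᵀ·H⁻¹·b̄ mod R` induces a well-defined pairing on `Rⁿ/H̄Rⁿ` with values in
`Q(R)/R` which is sesquilinear and hermitian. -/
theorem inv_pairing_well_defined_sesquilinear_hermitian
    {R : Type*} [CommRing R] [IsDomain R] [IsNoetherianRing R] [UniqueFactorizationMonoid R]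
    (σ : R →+* R) (hσ : Function.Involutive σ)
    (σK : FractionRing R →+* FractionRing R) (hσK : Function.Involutive σK)
    (hcompat : ∀ r : R, σK (algebraMap R (FractionRing R) r) = algebraMap R (FractionRing R) (σ r))
    {n : ℕ} (H : Matrix (Fin n) (Fin n) R) (hH : (H.map σ)ᵀ = H)
    (hdet : H.det ≠ 0) :
    -- the cokernel of `H̄` is a torsion `R`-module
    (∀ v : Fin n → R, ∃ r : R, r ≠ 0 ∧ ∃ u : Fin n → R, (H.map σ) *ᵥ u = r • v) ∧
    -- well-definedness modulo `R` in both variables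
    (∀ a b u s : Fin n → R, ∃ r : R, algebraMap R (FractionRing R) r =
      invPairing H σ (a + (H.map σ) *ᵥ u) (b + (H.map σ) *ᵥ s) - invPairing H σ a b) ∧
    -- sesquilinearity (as a pairing with values in `Q(R)/R`)
    (∀ (p q : R) (a b : Fin n → R), ∃ r : R, algebraMap R (FractionRing R) r =
      invPairing H σ (p • a) (q • b) -
        algebraMap R (FractionRing R) p * invPairing H σ a b *
          algebraMap R (FractionRing R) (σ q)) ∧
    -- hermitian property (as a pairing with values in `Q(R)/R`)
    (∀ a b : Fin n → R, ∃ r : R, algebraMap R (FractionRing R) r =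
      invPairing H σ b a - σK (invPairing H σ a b)) := by
  have hHs : H.map σ = Hᵀ := by
    have h := congrArg Matrix.transpose hH
    rwa [Matrix.transpose_transpose] at h
  have hHe : ∀ i j, σ (H i j) = H j i := fun i j => by
    have := congrFun (congrFun hHs i) j
    simpa using this
  set f := algebraMap R (FractionRing R) with hf
  set M := H.map f with hM
  have hMdet : IsUnit M.det := by
    have h1 : M.det = f H.det := by rw [hM, RingHom.map_det]; rfl
    rw [h1, isUnit_iff_ne_zero]
    intro h
    exact hdet ((IsFractionRing.injective R (FractionRing R)) (by rw [map_zero]; exact h))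
  have hMM : M * M⁻¹ = 1 := Matrix.mul_nonsing_inv M hMdet
  have hMM' : M⁻¹ * M = 1 := Matrix.nonsing_inv_mul M hMdet
  have hP : ∀ a b : Fin n → R, invPairing H σ a b = (f ∘ a) ⬝ᵥ (M⁻¹ *ᵥ (f ∘ σ ∘ b)) :=
    fun a b => rfl
  refine ⟨?_, ?_, ?_, ?_⟩
  · intro v
    refine ⟨H.det, hdet, (Hᵀ).adjugate *ᵥ v, ?_⟩
    rw [hHs, Matrix.mulVec_mulVec, Matrix.mul_adjugate, Matrix.det_transpose,
      Matrix.smul_mulVec, Matrix.one_mulVec]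
  · intro a b u s
    have hdot : ∀ x y : Fin n → R, f (x ⬝ᵥ y) = (f ∘ x) ⬝ᵥ (f ∘ y) := fun x y => by
      simp [dotProduct]
    have hmv : ∀ x : Fin n → R, f ∘ (H *ᵥ x) = M *ᵥ (f ∘ x) := fun x => by
      ext i; simp [mulVec, dotProduct, hM]
    have h1 : f ∘ (a + (H.map σ) *ᵥ u) = f ∘ a + (f ∘ u) ᵥ* M := by
      ext i
      simp [hHe, mulVec, vecMul, dotProduct, hM, mul_comm]
    have h2 : f ∘ σ ∘ (b + (H.map σ) *ᵥ s) = f ∘ σ ∘ b + M *ᵥ (f ∘ σ ∘ s) := by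
      ext i
      simp [mulVec, dotProduct, hM, hσ _]
    refine ⟨a ⬝ᵥ (σ ∘ s) + u ⬝ᵥ (σ ∘ b) + u ⬝ᵥ (H *ᵥ (σ ∘ s)), ?_⟩
    rw [hP, hP, h1, h2, map_add, map_add, hdot, hdot, hdot, hmv, mulVec_add, mulVec_mulVec, hMM',
      one_mulVec, add_dotProduct, dotProduct_add, dotProduct_add, ← dotProduct_mulVec,
      ← dotProduct_mulVec, mulVec_mulVec, hMM, one_mulVec]
    ring
  · intro p q a b
    refine ⟨0, ?_⟩
    have h1 : f ∘ (p • a) = f p • (f ∘ a) := by ext i; simp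
    have h2 : f ∘ σ ∘ (q • b) = f (σ q) • (f ∘ σ ∘ b) := by ext i; simp
    rw [hP, hP, h1, h2, mulVec_smul, smul_dotProduct, dotProduct_smul, map_zero, smul_eq_mul,
      smul_eq_mul]
    ring
  · intro a b
    refine ⟨0, ?_⟩
    have hMs : M.map σK = Mᵀ := by
      ext i j
      simp [hM, hcompat, hHe]
    have hinv : (M⁻¹).map σK = (M⁻¹)ᵀ := by
      rw [transpose_nonsing_inv]
      refine (inv_eq_left_inv ?_).symm
      rw [← hMs, ← Matrix.map_mul, hMM']
      simp
    have h1 : σK ((f ∘ a) ⬝ᵥ (M⁻¹ *ᵥ (f ∘ σ ∘ b))) =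
        (f ∘ σ ∘ a) ⬝ᵥ ((M⁻¹).map σK *ᵥ (f ∘ b)) := by
      simp [mulVec, dotProduct, hcompat, hσ _]
    rw [map_zero, hP, hP, h1, hinv, mulVec_transpose, dotProduct_comm (f ∘ σ ∘ a),
      ← dotProduct_mulVec, sub_self]
end

section
/- Let S be the 2×2 matrix with zero diagonal and both off-diagonal entries equal to 1, and let H' := H ⊕ S (an (n+2)×(n+2) hermitian matrix). Then the map [x] ↦ [(x,0,0)] is an R-module isomorphism from Tor_R(R^n/H̄R^n) onto Tor_R(R^{n+2}/H̄'R^{n+2}), Δ annihilates Tor_R(R^{n+2}/H̄'R^{n+2}) and so defines λ_{H'}, and this isomorphism is an isometry: λ_{H'}([(x,0,0)],[(y,0,0)]) = λ_H([x],[y]) for all torsion classes [x], [y]. -/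
open Matrix

theorem stab_mulVec {R : Type*} [CommRing R] (σ : R →+* R) {n : ℕ}
    (H : Matrix (Fin n) (Fin n) R) (w : (Fin n ⊕ Fin 2) → R) :
    ((Matrix.fromBlocks H 0 0 !![0, 1; 1, 0]).map σ) *ᵥ w =
      Sum.elim ((H.map σ) *ᵥ (w ∘ Sum.inl)) ![w (Sum.inr 1), w (Sum.inr 0)] := by
  rw [Matrix.fromBlocks_map, Matrix.fromBlocks_mulVec]
  congr 1
  · ext i
    simp [Matrix.mulVec, dotProduct]
  · ext i
    fin_cases i <;> simp [Matrix.mulVec, dotProduct, Fin.sum_univ_two]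

theorem stab_eq_iff {R : Type*} [CommRing R] (σ : R →+* R) {n : ℕ}
    (H : Matrix (Fin n) (Fin n) R) (w z : (Fin n ⊕ Fin 2) → R) :
    ((Matrix.fromBlocks H 0 0 !![0, 1; 1, 0]).map σ) *ᵥ w = z ↔
      (H.map σ) *ᵥ (w ∘ Sum.inl) = z ∘ Sum.inl ∧
        w (Sum.inr 1) = z (Sum.inr 0) ∧ w (Sum.inr 0) = z (Sum.inr 1) := by
  rw [stab_mulVec]
  constructor
  · rintro rfl
    simp
  · rintro ⟨h1, h2, h3⟩
    ext i
    rcases i with i | i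
    · simpa using congrFun h1 i
    · fin_cases i
      · simpa using h2
      · simpa using h3

theorem stab_exists_iff {R : Type*} [CommRing R] (σ : R →+* R) {n : ℕ}
    (H : Matrix (Fin n) (Fin n) R) (z : (Fin n ⊕ Fin 2) → R) :
    (∃ w, ((Matrix.fromBlocks H 0 0 !![0, 1; 1, 0]).map σ) *ᵥ w = z) ↔
      ∃ u, (H.map σ) *ᵥ u = z ∘ Sum.inl := by
  constructor
  · rintro ⟨w, hw⟩
    exact ⟨_, ((stab_eq_iff σ H w z).1 hw).1⟩
  · rintro ⟨u, hu⟩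
    exact ⟨Sum.elim u ![z (Sum.inr 1), z (Sum.inr 0)],
      (stab_eq_iff σ H _ z).2 ⟨by simpa using hu, by simp, by simp⟩⟩

theorem stab_torsion_iff {R : Type*} [CommRing R] (σ : R →+* R) {n : ℕ}
    (H : Matrix (Fin n) (Fin n) R) (z : (Fin n ⊕ Fin 2) → R) :
    torsionClass ((Matrix.fromBlocks H 0 0 !![0, 1; 1, 0]).map σ) z ↔
      torsionClass (H.map σ) (z ∘ Sum.inl) := by
  unfold torsionClass
  simp only [stab_exists_iff]
  rfl

/-- for `H' = H ⊕ S` with `S = [[0,1],[1,0]]`, the map `[x] ↦ [(x,0,0)]` is an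
isomorphism of `Tor(Rⁿ/H̄Rⁿ)` onto `Tor(R^{n+2}/H̄'R^{n+2})`, `Δ` annihilates the latter
(and so defines `λ_{H'}`), and this isomorphism is an isometry. -/
theorem lambda_stabilization_hyperbolic
    {R : Type*} [CommRing R] [IsDomain R] [IsNoetherianRing R] [UniqueFactorizationMonoid R]
    (σ : R →+* R) (hσ : Function.Involutive σ)
    {n : ℕ} (H : Matrix (Fin n) (Fin n) R) (hH : (H.map σ)ᵀ = H)
    (Δ : R) (hΔ0 : Δ ≠ 0) (hΔσ : σ Δ = Δ)
    (hΔann : ∀ v : Fin n → R, torsionClass (H.map σ) v →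
      ∃ v₀ : Fin n → R, (H.map σ) *ᵥ v₀ = Δ • v) :
    -- `[x] ↦ [(x,0,0)]` maps torsion classes to torsion classes, bijectively:
    (∀ x : Fin n → R, torsionClass (H.map σ) x ↔
      torsionClass ((Matrix.fromBlocks H 0 0 !![0, 1; 1, 0]).map σ) (Sum.elim x 0)) ∧
    (∀ x : Fin n → R,
      (∃ w' : (Fin n ⊕ Fin 2) → R,
        ((Matrix.fromBlocks H 0 0 !![0, 1; 1, 0]).map σ) *ᵥ w' = Sum.elim x 0) →
      ∃ w : Fin n → R, (H.map σ) *ᵥ w = x) ∧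
    (∀ x' : (Fin n ⊕ Fin 2) → R,
      torsionClass ((Matrix.fromBlocks H 0 0 !![0, 1; 1, 0]).map σ) x' →
      ∃ x : Fin n → R, torsionClass (H.map σ) x ∧
        ∃ w' : (Fin n ⊕ Fin 2) → R,
          ((Matrix.fromBlocks H 0 0 !![0, 1; 1, 0]).map σ) *ᵥ w' = x' - Sum.elim x 0) ∧
    -- `Δ` annihilates the torsion of the cokernel of `H̄'`
    (∀ x' : (Fin n ⊕ Fin 2) → R,
      torsionClass ((Matrix.fromBlocks H 0 0 !![0, 1; 1, 0]).map σ) x' →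
      ∃ x₀' : (Fin n ⊕ Fin 2) → R,
        ((Matrix.fromBlocks H 0 0 !![0, 1; 1, 0]).map σ) *ᵥ x₀' = Δ • x') ∧
    -- the isomorphism is an isometry: `λ_{H'}([(x,0,0)],[(y,0,0)]) = λ_H([x],[y])` in `Q(R)/R`
    (∀ x y x₀ y₀ : Fin n → R, ∀ X₀ Y₀ : (Fin n ⊕ Fin 2) → R,
      torsionClass (H.map σ) x → torsionClass (H.map σ) y →
      (H.map σ) *ᵥ x₀ = Δ • x → (H.map σ) *ᵥ y₀ = Δ • y →
      ((Matrix.fromBlocks H 0 0 !![0, 1; 1, 0]).map σ) *ᵥ X₀ = Δ • Sum.elim x 0 →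
      ((Matrix.fromBlocks H 0 0 !![0, 1; 1, 0]).map σ) *ᵥ Y₀ = Δ • Sum.elim y 0 →
      ∃ r : R, algebraMap R (FractionRing R) r =
        algebraMap R (FractionRing R)
            (X₀ ⬝ᵥ (Matrix.fromBlocks H 0 0 !![0, 1; 1, 0] *ᵥ (σ ∘ Y₀))) /
          (algebraMap R (FractionRing R) Δ) ^ 2 -
        algebraMap R (FractionRing R) (x₀ ⬝ᵥ (H *ᵥ (σ ∘ y₀))) /
          (algebraMap R (FractionRing R) Δ) ^ 2) := by
  refine ⟨fun x => ?_, fun x hx => ?_, fun x' hx' => ?_, fun x' hx' => ?_, ?_⟩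
  · rw [stab_torsion_iff, Sum.elim_comp_inl]
  · simpa using (stab_exists_iff σ H _).1 hx
  · refine ⟨x' ∘ Sum.inl, (stab_torsion_iff σ H x').1 hx', (stab_exists_iff σ H _).2 ⟨0, ?_⟩⟩
    ext i
    simp
  · exact (stab_exists_iff σ H _).2 (hΔann _ ((stab_torsion_iff σ H x').1 hx'))
  · intro x y x₀ y₀ X₀ Y₀ _ _ hx hy hX hY
    obtain ⟨hX1, hX2, hX3⟩ := (stab_eq_iff σ H _ _).1 hX
    obtain ⟨hY1, -, -⟩ := (stab_eq_iff σ H _ _).1 hY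
    have hX1' : (H.map σ) *ᵥ (X₀ ∘ Sum.inl) = (H.map σ) *ᵥ x₀ := by
      rw [hX1, hx]; rfl
    have hY1' : (H.map σ) *ᵥ (Y₀ ∘ Sum.inl) = (H.map σ) *ᵥ y₀ := by
      rw [hY1, hy]; rfl
    have hc : ∀ u : Fin n → R, H *ᵥ (σ ∘ u) = σ ∘ ((H.map σ) *ᵥ u) := by
      intro u
      ext i
      simp [Matrix.mulVec, dotProduct, hσ _]
    have ht : H.map σ = Hᵀ := by
      rw [← hH, Matrix.transpose_transpose, hH]
    have key : X₀ ⬝ᵥ (Matrix.fromBlocks H 0 0 !![0, 1; 1, 0] *ᵥ (σ ∘ Y₀)) =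
        x₀ ⬝ᵥ (H *ᵥ (σ ∘ y₀)) := by
      have e1 : X₀ ⬝ᵥ (Matrix.fromBlocks H 0 0 !![0, 1; 1, 0] *ᵥ (σ ∘ Y₀)) =
          (X₀ ∘ Sum.inl) ⬝ᵥ (H *ᵥ (σ ∘ (Y₀ ∘ Sum.inl))) := by
        simp at hX2 hX3
        rw [Matrix.fromBlocks_mulVec]
        simp [dotProduct, Fin.sum_univ_two, hX2, hX3, Function.comp_assoc]
      rw [e1, hc, hY1', ← hc, Matrix.dotProduct_mulVec, Matrix.dotProduct_mulVec,
        ← Matrix.mulVec_transpose, ← Matrix.mulVec_transpose, ← ht, hX1']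
    exact ⟨0, by rw [key]; simp⟩
end

section
/- Let ξ ∈ R^n be a column vector, let μ ∈ R satisfy μ̄ = μ, and let α be a unit of R. Let H' be the (n+2)×(n+2) matrix given in block form by rows [H, ξ, 0], [ξ̄ᵀ, μ, α], [0, ᾱ, 0]. Then H' is hermitian, the torsion submodules Tor_R(R^n/H̄R^n) and Tor_R(R^{n+2}/H̄'R^{n+2}) are isomorphic as R-modules, Δ annihilates Tor_R(R^{n+2}/H̄'R^{n+2}) and so defines λ_{H'}, and the pairings λ_{H'} and λ_H are isometric: there is an R-module isomorphism φ between the torsion submodules with λ_{H'}(φ(x),φ(y)) = λ_H(x,y) for all torsion classes x, y. -/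
open Matrix
open scoped Classical

/-- The value `(1/Δ²)·v₀ᵀ·H·w̄₀ ∈ Q(R)` computed from chosen lifts `v₀, w₀` of `v, w`
(and `0` if no lifts exist). -/
noncomputable def lamVal {R : Type*} [CommRing R] [IsDomain R] {m : Type*} [Fintype m]
    (H : Matrix m m R) (σ : R →+* R) (Δ : R) (v w : m → R) : FractionRing R :=
  if h : (∃ v₀ : m → R, (H.map σ) *ᵥ v₀ = Δ • v) ∧ (∃ w₀ : m → R, (H.map σ) *ᵥ w₀ = Δ • w) then
    algebraMap R (FractionRing R) (h.1.choose ⬝ᵥ (H *ᵥ (σ ∘ h.2.choose))) /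
      (algebraMap R (FractionRing R) Δ) ^ 2
  else 0

/-- The pairing `λ_H` on the torsion submodule of `Rⁿ/H̄Rⁿ`, with values in `Q(R)/R`. -/
noncomputable def lam {R : Type*} [CommRing R] [IsDomain R] {m : Type*} [Fintype m]
    (H : Matrix m m R) (σ : R →+* R) (Δ : R)
    (x y : Submodule.torsion R ((m → R) ⧸ LinearMap.range (H.map σ).mulVecLin)) :
    FractionRing R ⧸ ((algebraMap R (FractionRing R)).range).toAddSubgroup :=
  QuotientAddGroup.mk (lamVal H σ Δ (Quotient.out x.val) (Quotient.out y.val))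

/-- The matrix `H'` with block rows `[H, ξ, 0]`, `[ξ̄ᵀ, μ, α]`, `[0, ᾱ, 0]`. -/
def extMat {R : Type*} [CommRing R] {n : ℕ} (σ : R →+* R) (H : Matrix (Fin n) (Fin n) R)
    (ξ : Fin n → R) (μ a : R) : Matrix (Fin n ⊕ Fin 2) (Fin n ⊕ Fin 2) R :=
  Matrix.fromBlocks H
    (Matrix.of fun i j => if j = 0 then ξ i else 0)
    (Matrix.of fun j i => if j = 0 then σ (ξ i) else 0)
    !![μ, a; σ a, 0]

theorem extMat_map_mulVec {R : Type*} [CommRing R] {n : ℕ} (σ : R →+* R)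
    (hσ : Function.Involutive σ) (H : Matrix (Fin n) (Fin n) R)
    (ξ : Fin n → R) (μ a : R) (hμ : σ μ = μ) (u : Fin n → R) (p q : R) :
    ((extMat σ H ξ μ a).map σ) *ᵥ (Sum.elim u ![p, q]) =
      Sum.elim ((H.map σ) *ᵥ u + p • (σ ∘ ξ)) ![ξ ⬝ᵥ u + μ * p + σ a * q, a * p] := by
  ext i
  rcases i with i | i
  · simp [extMat, Matrix.mulVec, dotProduct, Fin.sum_univ_two, mul_comm]
  · fin_cases i
    · simp [extMat, Matrix.mulVec, dotProduct, Fin.sum_univ_two, hσ _, hμ, add_assoc]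
    · simp [extMat, Matrix.mulVec, dotProduct, Fin.sum_univ_two, hσ _]

theorem sum_elim_eta {R : Type*} {n : ℕ} (x : Fin n ⊕ Fin 2 → R) :
    x = Sum.elim (fun i => x (Sum.inl i)) ![x (Sum.inr 0), x (Sum.inr 1)] := by
  ext i
  rcases i with i | i
  · rfl
  · fin_cases i <;> rfl

theorem herm_pair {R : Type*} [CommRing R] {m : Type*} [Fintype m]
    (H : Matrix m m R) (σ : R →+* R) (hσ : Function.Involutive σ)
    (Δ : R) (hΔσ : σ Δ = Δ) (v₀ w w₀ : m → R) (hw : (H.map σ) *ᵥ w₀ = Δ • w) :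
    v₀ ⬝ᵥ (H *ᵥ (σ ∘ w₀)) = Δ * (v₀ ⬝ᵥ (σ ∘ w)) := by
  have : H *ᵥ (σ ∘ w₀) = Δ • (σ ∘ w) := by
    ext i
    have h := congrArg σ (congrFun hw i)
    simpa [Matrix.mulVec, dotProduct, hσ _, hΔσ] using h
  rw [this, dotProduct_smul, smul_eq_mul]

theorem herm_symm {R : Type*} [CommRing R] {m : Type*} [Fintype m]
    (H : Matrix m m R) (σ : R →+* R) (hH : (H.map σ)ᵀ = H) (u v : m → R) :
    u ⬝ᵥ (H *ᵥ v) = ((H.map σ) *ᵥ u) ⬝ᵥ v := by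
  conv_lhs => rw [← hH]
  rw [Matrix.mulVec_transpose, dotProduct_comm, ← Matrix.dotProduct_mulVec, dotProduct_comm]

theorem lam_eq {R : Type*} [CommRing R] [IsDomain R] {m : Type*} [Fintype m]
    (H : Matrix m m R) (σ : R →+* R) (hσ : Function.Involutive σ) (hH : (H.map σ)ᵀ = H)
    (Δ : R) (hΔ0 : Δ ≠ 0) (hΔσ : σ Δ = Δ)
    (x y : Submodule.torsion R ((m → R) ⧸ LinearMap.range (H.map σ).mulVecLin))
    (v w v₀ w₀ : m → R)
    (hx : x.val = Submodule.Quotient.mk v) (hy : y.val = Submodule.Quotient.mk w)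
    (hv : (H.map σ) *ᵥ v₀ = Δ • v) (hw : (H.map σ) *ᵥ w₀ = Δ • w) :
    lam H σ Δ x y = QuotientAddGroup.mk
      (algebraMap R (FractionRing R) (v₀ ⬝ᵥ (σ ∘ w)) / algebraMap R (FractionRing R) Δ) := by
  have hΔ' : algebraMap R (FractionRing R) Δ ≠ 0 := by
    simpa using hΔ0
  unfold lam
  generalize hv' : (Quotient.out x.val : m → R) = v'
  generalize hw' : (Quotient.out y.val : m → R) = w'
  have hx' : x.val = Submodule.Quotient.mk v' := by
    rw [← hv']; exact (Quotient.out_eq x.val).symm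
  have hy' : y.val = Submodule.Quotient.mk w' := by
    rw [← hw']; exact (Quotient.out_eq y.val).symm
  rw [hx, Submodule.Quotient.eq] at hx'
  rw [hy, Submodule.Quotient.eq] at hy'
  obtain ⟨s, hs⟩ := hx'
  obtain ⟨t, ht⟩ := hy'
  rw [Matrix.mulVecLin_apply] at hs ht
  have h : (∃ v₀ : m → R, (H.map σ) *ᵥ v₀ = Δ • v') ∧
      (∃ w₀ : m → R, (H.map σ) *ᵥ w₀ = Δ • w') := by
    refine ⟨⟨v₀ - Δ • s, ?_⟩, ⟨w₀ - Δ • t, ?_⟩⟩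
    · rw [Matrix.mulVec_sub, Matrix.mulVec_smul, hs, hv, smul_sub]; abel
    · rw [Matrix.mulVec_sub, Matrix.mulVec_smul, ht, hw, smul_sub]; abel
  unfold lamVal
  rw [dif_pos h]
  have h1 := h.1.choose_spec
  have h2 := h.2.choose_spec
  generalize h.1.choose = p at h1 ⊢
  generalize h.2.choose = q at h2 ⊢
  have e1 : p ⬝ᵥ (H *ᵥ (σ ∘ q)) = Δ * (p ⬝ᵥ (σ ∘ w')) := herm_pair H σ hσ Δ hΔσ p w' q h2
  have e2 : p ⬝ᵥ (H *ᵥ (σ ∘ q)) = Δ * (v' ⬝ᵥ (σ ∘ q)) := by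
    rw [herm_symm H σ hH, h1, smul_dotProduct, smul_eq_mul]
  have e3 : v₀ ⬝ᵥ (H *ᵥ (σ ∘ q)) = Δ * (v₀ ⬝ᵥ (σ ∘ w')) := herm_pair H σ hσ Δ hΔσ v₀ w' q h2
  have e4 : v₀ ⬝ᵥ (H *ᵥ (σ ∘ q)) = Δ * (v ⬝ᵥ (σ ∘ q)) := by
    rw [herm_symm H σ hH, hv, smul_dotProduct, smul_eq_mul]
  have e5 : s ⬝ᵥ (H *ᵥ (σ ∘ q)) = Δ * (s ⬝ᵥ (σ ∘ w')) := herm_pair H σ hσ Δ hΔσ s w' q h2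
  have e6 : s ⬝ᵥ (H *ᵥ (σ ∘ q)) = v ⬝ᵥ (σ ∘ q) - v' ⬝ᵥ (σ ∘ q) := by
    rw [herm_symm H σ hH, hs, sub_dotProduct]
  have ht' : H *ᵥ (σ ∘ t) = σ ∘ w - σ ∘ w' := by
    ext i
    have h := congrArg σ (congrFun ht i)
    simpa [Matrix.mulVec, dotProduct, hσ _] using h
  have e7 : v₀ ⬝ᵥ (σ ∘ w) - v₀ ⬝ᵥ (σ ∘ w') = Δ * (v ⬝ᵥ (σ ∘ t)) := by
    rw [← dotProduct_sub, ← ht', herm_symm H σ hH, hv, smul_dotProduct, smul_eq_mul]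
  have key : v₀ ⬝ᵥ (σ ∘ w) = p ⬝ᵥ (σ ∘ w') + Δ * (s ⬝ᵥ (σ ∘ w') + v ⬝ᵥ (σ ∘ t)) := by
    apply mul_left_cancel₀ hΔ0
    linear_combination Δ * e7 - e3 + e4 - e2 + e1 + Δ * e5 - Δ * e6
  rw [QuotientAddGroup.eq]
  refine ⟨s ⬝ᵥ (σ ∘ w') + v ⬝ᵥ (σ ∘ t), ?_⟩
  rw [e1, key]
  simp only [map_add, map_mul]
  field_simp
  ring

/-- for `H'` as above with `α` a unit and `μ̄ = μ`, the matrix `H'` is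
hermitian, `Δ` annihilates the torsion of the cokernel of `H̄'` (and so defines `λ_{H'}`),
and the pairings `λ_{H'}` and `λ_H` are isometric via an `R`-module isomorphism `φ` of the
torsion submodules. -/
theorem lambda_extension_isometric
    {R : Type*} [CommRing R] [IsDomain R] [IsNoetherianRing R] [UniqueFactorizationMonoid R]
    (σ : R →+* R) (hσ : Function.Involutive σ)
    {n : ℕ} (H : Matrix (Fin n) (Fin n) R) (hH : (H.map σ)ᵀ = H)
    (Δ : R) (hΔ0 : Δ ≠ 0) (hΔσ : σ Δ = Δ)
    (hΔann : ∀ v : Fin n → R, torsionClass (H.map σ) v →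
      ∃ v₀ : Fin n → R, (H.map σ) *ᵥ v₀ = Δ • v)
    (ξ : Fin n → R) (μ : R) (hμ : σ μ = μ) (a : Rˣ) :
    -- `H'` is hermitian
    ((extMat σ H ξ μ (a : R)).map σ)ᵀ = extMat σ H ξ μ (a : R) ∧
    -- `Δ` annihilates the torsion submodule of the cokernel of `H̄'`
    (∀ v' : (Fin n ⊕ Fin 2) → R, torsionClass ((extMat σ H ξ μ (a : R)).map σ) v' →
      ∃ v₀' : (Fin n ⊕ Fin 2) → R, ((extMat σ H ξ μ (a : R)).map σ) *ᵥ v₀' = Δ • v') ∧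
    -- the torsion submodules are isomorphic via an isometry `φ` between `λ_H` and `λ_{H'}`
    ∃ φ : Submodule.torsion R ((Fin n → R) ⧸ LinearMap.range (H.map σ).mulVecLin) ≃ₗ[R]
        Submodule.torsion R (((Fin n ⊕ Fin 2) → R) ⧸
          LinearMap.range ((extMat σ H ξ μ (a : R)).map σ).mulVecLin),
      ∀ x y, lam (extMat σ H ξ μ (a : R)) σ Δ (φ x) (φ y) = lam H σ Δ x y := by
  have hmv := extMat_map_mulVec σ hσ H ξ μ (a : R) hμ
  have hsa : σ (a : R) * σ ((a⁻¹ : Rˣ) : R) = 1 := by rw [← map_mul]; simp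
  have haa : (a : R) * ((a⁻¹ : Rˣ) : R) = 1 := by simp
  have hherm : ((extMat σ H ξ μ (a : R)).map σ)ᵀ = extMat σ H ξ μ (a : R) := by
    have hH' : ∀ i j, σ (H j i) = H i j := fun i j => congrFun (congrFun hH i) j
    ext i j
    rcases i with i | i <;> rcases j with j | j
    · simp [extMat, hH']
    · fin_cases j <;> simp [extMat, hσ _]
    · fin_cases i <;> simp [extMat]
    · fin_cases i <;> fin_cases j <;> simp [extMat, hμ, hσ _]
  -- lifting solutions
  have hlift : ∀ (u v : Fin n → R) (r s t : R),
      (H.map σ) *ᵥ u = r • (v - (((a⁻¹ : Rˣ) : R) * t) • (σ ∘ ξ)) →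
      ((extMat σ H ξ μ (a : R)).map σ) *ᵥ
        (Sum.elim u ![r * (((a⁻¹ : Rˣ) : R) * t),
          σ ((a⁻¹ : Rˣ) : R) * (r * s - ξ ⬝ᵥ u - μ * (r * (((a⁻¹ : Rˣ) : R) * t)))]) =
        r • Sum.elim v ![s, t] := by
    intro u v r s t h
    rw [hmv, h]
    ext i
    rcases i with i | i
    · simp; ring
    · fin_cases i
      · simp
        linear_combination (r * s - ξ ⬝ᵥ u - μ * (r * (((a⁻¹ : Rˣ) : R) * t))) * hsa
      · simp
        linear_combination r * t * haa
  have hdesc : ∀ (u v : Fin n → R) (p q r s t : R),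
      ((extMat σ H ξ μ (a : R)).map σ) *ᵥ (Sum.elim u ![p, q]) = r • Sum.elim v ![s, t] →
      (H.map σ) *ᵥ u = r • (v - (((a⁻¹ : Rˣ) : R) * t) • (σ ∘ ξ)) := by
    intro u v p q r s t h
    rw [hmv] at h
    have h3 : (a : R) * p = r * t := by simpa using congrFun h (Sum.inr 1)
    ext i
    have h1 : ((H.map σ) *ᵥ u) i + p * σ (ξ i) = r * v i := by
      simpa using congrFun h (Sum.inl i)
    simp
    linear_combination h1 + σ (ξ i) * p * haa - σ (ξ i) * ((a⁻¹ : Rˣ) : R) * h3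
  refine ⟨hherm, ?_, ?_⟩
  · rintro v' ⟨r, hr, u', hu'⟩
    rw [sum_elim_eta v', sum_elim_eta u'] at hu'
    obtain ⟨v₀, hv₀⟩ := hΔann _ ⟨r, hr, _, hdesc _ _ _ _ _ _ _ hu'⟩
    rw [sum_elim_eta v']
    exact ⟨_, hlift _ _ _ _ _ hv₀⟩
  · let N := LinearMap.range (H.map σ).mulVecLin
    let N' := LinearMap.range ((extMat σ H ξ μ (a : R)).map σ).mulVecLin
    let f : (Fin n → R) →ₗ[R] (Fin n ⊕ Fin 2 → R) :=
      { toFun := fun v => Sum.elim v ![0, 0]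
        map_add' := by
          intro x y; ext i
          rcases i with i | i
          · simp
          · fin_cases i <;> simp
        map_smul' := by
          intro c x; ext i
          rcases i with i | i
          · simp
          · fin_cases i <;> simp }
    let g : (Fin n ⊕ Fin 2 → R) →ₗ[R] (Fin n → R) :=
      { toFun := fun x => (fun i => x (Sum.inl i)) -
          (((a⁻¹ : Rˣ) : R) * x (Sum.inr 1)) • (σ ∘ ξ)
        map_add' := by
          intro x y; ext i; simp; ring
        map_smul' := by
          intro c x; ext i; simp; ring }
    have hf : N ≤ N'.comap f := by
      rintro _ ⟨u, rfl⟩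
      have := hlift u ((H.map σ) *ᵥ u) 1 0 0 (by simp)
      rw [one_smul] at this
      exact ⟨_, this⟩
    have hg : N' ≤ N.comap g := by
      rintro x ⟨u, hu⟩
      rw [Matrix.mulVecLin_apply, ← one_smul R x, sum_elim_eta u, sum_elim_eta x] at hu
      have := hdesc _ _ _ _ _ _ _ hu
      rw [one_smul] at this
      exact ⟨_, this⟩
    let e : ((Fin n → R) ⧸ N) ≃ₗ[R] ((Fin n ⊕ Fin 2 → R) ⧸ N') :=
      LinearEquiv.ofLinearMap (N.mapQ N' f hf) (N'.mapQ N g hg)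
        (by
          apply LinearMap.ext
          intro x
          obtain ⟨x, rfl⟩ := Submodule.Quotient.mk_surjective _ x
          simp only [LinearMap.comp_apply, Submodule.mapQ_apply, LinearMap.id_apply]
          rw [Eq.comm, Submodule.Quotient.eq]
          have := hlift 0 ((((a⁻¹ : Rˣ) : R) * x (Sum.inr 1)) • (σ ∘ ξ)) 1
            (x (Sum.inr 0)) (x (Sum.inr 1)) (by simp)
          rw [one_smul] at this
          refine ⟨_, this.trans ?_⟩
          ext i
          rcases i with i | i
          · simp [f, g]
          · fin_cases i <;> simp [f, g])
        (by
          apply LinearMap.ext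
          intro x
          obtain ⟨x, rfl⟩ := Submodule.Quotient.mk_surjective _ x
          simp only [LinearMap.comp_apply, Submodule.mapQ_apply, LinearMap.id_apply]
          congr 1
          ext i
          simp [f, g])
    have he : ∀ v, e (Submodule.Quotient.mk v) = Submodule.Quotient.mk (f v) := fun v => rfl
    have htor : (Submodule.torsion R ((Fin n → R) ⧸ N)).map (e : _ →ₗ[R] _) =
        Submodule.torsion R ((Fin n ⊕ Fin 2 → R) ⧸ N') := by
      ext y
      rw [Submodule.mem_map]
      constructor
      · rintro ⟨x, hx, rfl⟩
        rw [Submodule.mem_torsion_iff] at hx ⊢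
        obtain ⟨c, hc⟩ := hx
        refine ⟨c, ?_⟩
        have := congrArg e hc
        rw [map_zero] at this
        rw [← this]
        exact (e.map_smul (c : R) x).symm
      · intro hy
        refine ⟨e.symm y, ?_, by simp⟩
        rw [Submodule.mem_torsion_iff] at hy ⊢
        obtain ⟨c, hc⟩ := hy
        refine ⟨c, ?_⟩
        have := congrArg e.symm hc
        rw [map_zero] at this
        rw [← this]
        exact (e.symm.map_smul (c : R) y).symm
    have hrep : ∀ x : Submodule.torsion R ((Fin n → R) ⧸ N), ∃ v v₀ : Fin n → R,
        x.val = Submodule.Quotient.mk v ∧ (H.map σ) *ᵥ v₀ = Δ • v := by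
      rintro ⟨x, hx⟩
      obtain ⟨v, rfl⟩ := Submodule.Quotient.mk_surjective _ x
      rw [Submodule.mem_torsion_iff] at hx
      obtain ⟨c, hc⟩ := hx
      have hc' : (Submodule.Quotient.mk ((c : R) • v) : (Fin n → R) ⧸ N) = 0 := hc
      rw [Submodule.Quotient.mk_eq_zero] at hc'
      obtain ⟨u, hu⟩ := hc'
      obtain ⟨v₀, hv₀⟩ := hΔann v ⟨c, nonZeroDivisors.ne_zero c.2, u, hu⟩
      exact ⟨v, v₀, rfl, hv₀⟩
    refine ⟨e.ofSubmodules _ _ htor, ?_⟩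
    intro x y
    obtain ⟨v, v₀, hx, hv⟩ := hrep x
    obtain ⟨w, w₀, hy, hw⟩ := hrep y
    rw [lam_eq H σ hσ hH Δ hΔ0 hΔσ x y v w v₀ w₀ hx hy hv hw]
    rw [lam_eq _ σ hσ hherm Δ hΔ0 hΔσ _ _ (f v) (f w) _ _ ?_ ?_
      (hlift v₀ v Δ 0 0 (by simpa using hv)) (hlift w₀ w Δ 0 0 (by simpa using hw))]
    · congr 3
      simp [f, dotProduct, Fin.sum_univ_two]
    · rw [← he, ← hx]; rfl
    · rw [← he, ← hy]; rfl
end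

section
/- The pairing λ_H does not depend on the choice of Δ: if Δ and Δ' are two nonzero elements of R with Δ̄ = Δ and Δ̄' = Δ', both annihilating the torsion submodule Tor_R(R^n/H̄R^n), then for all torsion classes [v], [w] the values (1/Δ²)·v₀ᵀ·H·w̄₀ and (1/Δ'²)·v₀'ᵀ·H·w̄₀' agree in Q(R)/R, where H̄v₀ = Δ·v, H̄w₀ = Δ·w, H̄v₀' = Δ'·v and H̄w₀' = Δ'·w. -/
open Matrix

/-- the pairing `λ_H` does not depend on the choice of the annihilating
element `Δ`: the values computed with `Δ` and with `Δ'` agree in `Q(R)/R`. -/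
theorem lambda_independent_of_Delta
    {R : Type*} [CommRing R] [IsDomain R] [IsNoetherianRing R] [UniqueFactorizationMonoid R]
    (σ : R →+* R) (hσ : Function.Involutive σ)
    {n : ℕ} (H : Matrix (Fin n) (Fin n) R) (hH : (H.map σ)ᵀ = H)
    (Δ Δ' : R) (hΔ0 : Δ ≠ 0) (hΔ'0 : Δ' ≠ 0) (hΔσ : σ Δ = Δ) (hΔ'σ : σ Δ' = Δ')
    (hΔann : ∀ v : Fin n → R, torsionClass (H.map σ) v →
      ∃ v₀ : Fin n → R, (H.map σ) *ᵥ v₀ = Δ • v)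
    (hΔ'ann : ∀ v : Fin n → R, torsionClass (H.map σ) v →
      ∃ v₀ : Fin n → R, (H.map σ) *ᵥ v₀ = Δ' • v)
    (v w v₀ w₀ v₀' w₀' : Fin n → R)
    (hv : torsionClass (H.map σ) v) (hw : torsionClass (H.map σ) w)
    (hv₀ : (H.map σ) *ᵥ v₀ = Δ • v) (hw₀ : (H.map σ) *ᵥ w₀ = Δ • w)
    (hv₀' : (H.map σ) *ᵥ v₀' = Δ' • v) (hw₀' : (H.map σ) *ᵥ w₀' = Δ' • w) :
    ∃ r : R, algebraMap R (FractionRing R) r =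
      algebraMap R (FractionRing R) (v₀ ⬝ᵥ (H *ᵥ (σ ∘ w₀))) /
        (algebraMap R (FractionRing R) Δ) ^ 2 -
      algebraMap R (FractionRing R) (v₀' ⬝ᵥ (H *ᵥ (σ ∘ w₀'))) /
        (algebraMap R (FractionRing R) Δ') ^ 2 := by
  have hT : Hᵀ = H.map σ := by
    conv_lhs => rw [← hH]
    exact Matrix.transpose_transpose _
  have hR : ∀ (c : R) (x y : Fin n → R), σ c = c → (H.map σ) *ᵥ x = c • y →
      H *ᵥ (σ ∘ x) = c • (σ ∘ y) := by
    intro c x y hc h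
    funext i
    have h1 := congrArg σ (congrFun h i)
    simp only [Matrix.mulVec, dotProduct, Matrix.map_apply, map_sum, map_mul, hσ _,
      Pi.smul_apply, smul_eq_mul, hc] at h1
    simpa [Matrix.mulVec, dotProduct] using h1
  have hL : ∀ (c : R) (x y z : Fin n → R), (H.map σ) *ᵥ x = c • y →
      x ⬝ᵥ (H *ᵥ z) = c * (y ⬝ᵥ z) := by
    intro c x y z h
    rw [Matrix.dotProduct_mulVec, ← Matrix.mulVec_transpose, hT, h, smul_dotProduct, smul_eq_mul]
  have e1 : v₀ ⬝ᵥ (H *ᵥ (σ ∘ w₀)) = Δ * (v₀ ⬝ᵥ (σ ∘ w)) := by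
    rw [hR Δ w₀ w hΔσ hw₀, dotProduct_smul, smul_eq_mul]
  have e2 := hL Δ' v₀' v (σ ∘ w₀') hv₀'
  have e3 := hL Δ v₀ v (σ ∘ w₀') hv₀
  rw [hR Δ' w₀' w hΔ'σ hw₀', dotProduct_smul, smul_eq_mul] at e3
  have n1 : algebraMap R (FractionRing R) Δ ≠ 0 := by
    simpa using hΔ0
  have n2 : algebraMap R (FractionRing R) Δ' ≠ 0 := by
    simpa using hΔ'0
  refine ⟨0, ?_⟩
  rw [map_zero, eq_comm, sub_eq_zero, div_eq_div_iff (pow_ne_zero 2 n1) (pow_ne_zero 2 n2), e1, e2]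
  simp only [← map_pow, ← map_mul]
  congr 1
  linear_combination (Δ * Δ') * e3
end

section
/- Let P be an invertible n×n matrix over R. Then PᵀHP̄ is hermitian, the map x ↦ P̄ᵀx induces an R-module isomorphism from R^n/H̄R^n onto R^n/(P̄ᵀH̄P)R^n restricting to an isomorphism of torsion submodules, Δ annihilates the torsion submodule of R^n/(P̄ᵀH̄P)R^n and so defines λ_{PᵀHP̄}, and this isomorphism is an isometry: λ_{PᵀHP̄}([P̄ᵀx],[P̄ᵀy]) = λ_H([x],[y]) for all torsion classes [x], [y]. -/
open Matrix

/-- for an invertible matrix `P` over `R`, the matrix `PᵀHP̄` is hermitian,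
`x ↦ P̄ᵀx` induces an isomorphism `Rⁿ/H̄Rⁿ ≅ Rⁿ/(P̄ᵀH̄P)Rⁿ` restricting to an isomorphism
of torsion submodules, `Δ` annihilates the torsion of the new cokernel (and so defines
`λ_{PᵀHP̄}`), and this isomorphism is an isometry. -/
theorem lambda_congruence
    {R : Type*} [CommRing R] [IsDomain R] [IsNoetherianRing R] [UniqueFactorizationMonoid R]
    (σ : R →+* R) (hσ : Function.Involutive σ)
    {n : ℕ} (H : Matrix (Fin n) (Fin n) R) (hH : (H.map σ)ᵀ = H)
    (Δ : R) (hΔ0 : Δ ≠ 0) (hΔσ : σ Δ = Δ)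
    (hΔann : ∀ v : Fin n → R, torsionClass (H.map σ) v →
      ∃ v₀ : Fin n → R, (H.map σ) *ᵥ v₀ = Δ • v)
    (P : Matrix (Fin n) (Fin n) R) (hP : IsUnit P.det) :
    -- `PᵀHP̄` is hermitian
    ((Pᵀ * H * P.map σ).map σ)ᵀ = Pᵀ * H * P.map σ ∧
    -- `x ↦ P̄ᵀx` identifies `H̄Rⁿ` with `(P̄ᵀH̄P)Rⁿ` and is onto modulo `(P̄ᵀH̄P)Rⁿ`
    (∀ v : Fin n → R,
      (∃ w : Fin n → R, (H.map σ) *ᵥ w = v) ↔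
      (∃ w : Fin n → R, ((Pᵀ * H * P.map σ).map σ) *ᵥ w = (P.map σ)ᵀ *ᵥ v)) ∧
    (∀ v' : Fin n → R, ∃ v : Fin n → R, ∃ w : Fin n → R,
      ((Pᵀ * H * P.map σ).map σ) *ᵥ w = v' - (P.map σ)ᵀ *ᵥ v) ∧
    -- `x ↦ P̄ᵀx` preserves torsion classes in both directions
    (∀ v : Fin n → R, torsionClass (H.map σ) v ↔
      torsionClass ((Pᵀ * H * P.map σ).map σ) ((P.map σ)ᵀ *ᵥ v)) ∧
    -- `Δ` annihilates the torsion of the cokernel of `P̄ᵀH̄P`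
    (∀ v : Fin n → R, torsionClass ((Pᵀ * H * P.map σ).map σ) v →
      ∃ v₀ : Fin n → R, ((Pᵀ * H * P.map σ).map σ) *ᵥ v₀ = Δ • v) ∧
    -- the isomorphism is an isometry: `λ_{PᵀHP̄}([P̄ᵀx],[P̄ᵀy]) = λ_H([x],[y])` in `Q(R)/R`
    (∀ x y x₀ y₀ X₀ Y₀ : Fin n → R,
      torsionClass (H.map σ) x → torsionClass (H.map σ) y →
      (H.map σ) *ᵥ x₀ = Δ • x → (H.map σ) *ᵥ y₀ = Δ • y →
      ((Pᵀ * H * P.map σ).map σ) *ᵥ X₀ = Δ • ((P.map σ)ᵀ *ᵥ x) →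
      ((Pᵀ * H * P.map σ).map σ) *ᵥ Y₀ = Δ • ((P.map σ)ᵀ *ᵥ y) →
      ∃ r : R, algebraMap R (FractionRing R) r =
        algebraMap R (FractionRing R) (X₀ ⬝ᵥ ((Pᵀ * H * P.map σ) *ᵥ (σ ∘ Y₀))) /
          (algebraMap R (FractionRing R) Δ) ^ 2 -
        algebraMap R (FractionRing R) (x₀ ⬝ᵥ (H *ᵥ (σ ∘ y₀))) /
          (algebraMap R (FractionRing R) Δ) ^ 2) := by
  obtain ⟨Pi, hPi, hPi'⟩ : ∃ Pi, P * Pi = 1 ∧ Pi * P = 1 :=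
    ⟨P⁻¹, Matrix.mul_nonsing_inv P hP, Matrix.nonsing_inv_mul P hP⟩
  have hPP : (P.map σ).map σ = P := by
    ext i j
    simp [hσ _]
  have hHH : (H.map σ).map σ = H := by
    ext i j
    simp [hσ _]
  have hA : Hᵀ = H.map σ := by
    conv_lhs => rw [← hH]
    simp
  have hM : (Pᵀ * H * P.map σ).map σ = (P.map σ)ᵀ * H.map σ * P := by
    rw [Matrix.map_mul, Matrix.map_mul, hPP, Matrix.transpose_map]
  have hQi : ((Pi.map σ)ᵀ) * (P.map σ)ᵀ = 1 := by
    rw [← Matrix.transpose_mul, ← Matrix.map_mul, hPi]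
    simp
  have hQi' : (P.map σ)ᵀ * ((Pi.map σ)ᵀ) = 1 := by
    rw [← Matrix.transpose_mul, ← Matrix.map_mul, hPi']
    simp
  have hherm : ((Pᵀ * H * P.map σ).map σ)ᵀ = Pᵀ * H * P.map σ := by
    rw [hM, Matrix.transpose_mul, Matrix.transpose_mul, hH, Matrix.transpose_transpose,
      Matrix.mul_assoc]
  have hHσ : ∀ u : Fin n → R, H *ᵥ (σ ∘ u) = σ ∘ ((H.map σ) *ᵥ u) := by
    intro u
    funext i
    have := RingHom.map_mulVec σ (H.map σ) u i
    rw [hHH] at this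
    exact this.symm
  have hPσ : ∀ u : Fin n → R, (P.map σ) *ᵥ (σ ∘ u) = σ ∘ (P *ᵥ u) := by
    intro u
    funext i
    exact (RingHom.map_mulVec σ P u i).symm
  rw [hM] at *
  generalize hQ : (P.map σ)ᵀ = Q at *
  generalize hQj : (Pi.map σ)ᵀ = Qi at *
  generalize hAA : H.map σ = A at *
  have key : ∀ u v : Fin n → R, (Q * A * P) *ᵥ u = Q *ᵥ v ↔ A *ᵥ (P *ᵥ u) = v := by
    intro u v
    rw [← Matrix.mulVec_mulVec, ← Matrix.mulVec_mulVec]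
    constructor
    · intro h
      have := congrArg (Qi *ᵥ ·) h
      simpa [Matrix.mulVec_mulVec, hQi, ← Matrix.mul_assoc] using this
    · rintro rfl
      rfl
  have hPs : ∀ w : Fin n → R, P *ᵥ (Pi *ᵥ w) = w := by
    intro w
    simp [Matrix.mulVec_mulVec, hPi]
  have hQs : ∀ w : Fin n → R, Q *ᵥ (Qi *ᵥ w) = w := by
    intro w
    simp [Matrix.mulVec_mulVec, hQi']
  have range : ∀ v : Fin n → R, (∃ w : Fin n → R, A *ᵥ w = v) ↔
      (∃ w : Fin n → R, (Q * A * P) *ᵥ w = Q *ᵥ v) := by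
    intro v
    constructor
    · rintro ⟨w, hw⟩
      exact ⟨Pi *ᵥ w, (key _ _).2 (by rw [hPs, hw])⟩
    · rintro ⟨w, hw⟩
      exact ⟨P *ᵥ w, (key _ _).1 hw⟩
  have tors : ∀ v : Fin n → R, torsionClass A v ↔ torsionClass (Q * A * P) (Q *ᵥ v) := by
    intro v
    unfold torsionClass
    simp only [range, Matrix.mulVec_smul]
  refine ⟨hherm, range, ?_, tors, ?_, ?_⟩
  · intro v'
    exact ⟨Qi *ᵥ v', 0, by simp [hQs]⟩
  · intro v hv
    rw [← hQs v] at hv ⊢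
    rw [← Matrix.mulVec_smul, ← range]
    exact hΔann _ ((tors _).2 hv)
  · intro x y x₀ y₀ X₀ Y₀ _ _ hx hy hX hY
    rw [← Matrix.mulVec_smul, key] at hX hY
    refine ⟨0, ?_⟩
    have e : X₀ ⬝ᵥ ((Pᵀ * H * P.map σ) *ᵥ (σ ∘ Y₀)) = x₀ ⬝ᵥ (H *ᵥ (σ ∘ y₀)) := by
      rw [← Matrix.mulVec_mulVec, ← Matrix.mulVec_mulVec, hPσ, hHσ, hY, ← hy, ← hHσ,
        Matrix.dotProduct_mulVec, Matrix.vecMul_transpose, Matrix.dotProduct_mulVec,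
        Matrix.dotProduct_mulVec, ← Matrix.mulVec_transpose, ← Matrix.mulVec_transpose,
        hA, hX, hx]
    rw [e]
    simp
end

section
/- For every m ∈ ℤ and every class [x] ∈ H^m(D) whose image in H^m(J) vanishes, there exists a class [k] ∈ H^{m−1}(K) with δ_K^h([k]) = v_D([x]); that is, v_D maps ker(H^m(D) → H^m(J)) into the image of the connecting homomorphism δ_K^h : H^{m−1}(K) → H^m(H). -/
open CategoryTheory HomologicalComplex

/-- in a 3×3 diagram of cochain complexes with exact rows and columns,
`v_D` maps `ker(H^m(D) → H^m(J))` into the image of the connecting homomorphism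
`δ_K^h : H^{m−1}(K) → H^m(H)` of the bottom row. -/
theorem vD_ker_into_image_of_delta
    {R : Type*} [CommRing R]
    (A B C D E F G J K : CochainComplex (ModuleCat R) ℤ)
    (hAB : A ⟶ B) (hBC : B ⟶ C) (hDE : D ⟶ E) (hEF : E ⟶ F) (hGJ : G ⟶ J) (hJK : J ⟶ K)
    (vAD : A ⟶ D) (vDG : D ⟶ G) (vBE : B ⟶ E) (vEJ : E ⟶ J) (vCF : C ⟶ F) (vFK : F ⟶ K)
    (w₁ : hAB ≫ hBC = 0) (w₂ : hDE ≫ hEF = 0) (w₃ : hGJ ≫ hJK = 0)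
    (w₄ : vAD ≫ vDG = 0) (w₅ : vBE ≫ vEJ = 0) (w₆ : vCF ≫ vFK = 0)
    (row₁ : (ShortComplex.mk hAB hBC w₁).ShortExact)
    (row₂ : (ShortComplex.mk hDE hEF w₂).ShortExact)
    (row₃ : (ShortComplex.mk hGJ hJK w₃).ShortExact)
    (col₁ : (ShortComplex.mk vAD vDG w₄).ShortExact)
    (col₂ : (ShortComplex.mk vBE vEJ w₅).ShortExact)
    (col₃ : (ShortComplex.mk vCF vFK w₆).ShortExact)
    (sq₁ : hAB ≫ vBE = vAD ≫ hDE) (sq₂ : hBC ≫ vCF = vBE ≫ hEF)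
    (sq₃ : hDE ≫ vEJ = vDG ≫ hGJ) (sq₄ : hEF ≫ vFK = vEJ ≫ hJK)
    (m : ℤ) (x : D.homology m)
    (hx : homologyMap (vDG ≫ hGJ) m x = 0) :
    ∃ k : K.homology (m - 1),
      row₃.δ (m - 1) m (by simp only [ComplexShape.up_Rel]; omega) k =
        homologyMap vDG m x := by
  rw [homologyMap_comp] at hx
  have h := row₃.homology_exact₁ (m - 1) m (by simp only [ComplexShape.up_Rel]; omega)
  rw [ShortComplex.moduleCat_exact_iff] at h
  exact h (homologyMap vDG m x) hx
end

section
/- Let m ∈ ℤ and let [x] ∈ H^m(D) be a class whose image in H^m(J) vanishes. Then for every [b] ∈ H^m(B) with v_B([b]) = h_D([x]) and every [k] ∈ H^{m−1}(K) with δ_K^h([k]) = v_D([x]), the element h_B([b]) + δ_K^v([k]) of H^m(C) lies in the image of the composite δ_K^v ∘ h_J : H^{m−1}(J) → H^m(C). (This is the elementwise form of the anticommutativity of the square h_B ∘ v_B^{−1} ∘ h_D = −δ_K^v ∘ (δ_K^h)^{−1} ∘ v_D on ker(H^m(D) → H^m(J)).) -/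
open CategoryTheory HomologicalComplex

namespace SqAux
universe v u
variable {R : Type u} [CommRing R]

lemma delta_mod {S : ShortComplex (CochainComplex (ModuleCat.{v} R) ℤ)} (hS : S.ShortExact)
    (i j : ℤ) (hij : (ComplexShape.up ℤ).Rel i j)
    (z3 : S.X₃.cycles i) (x2 : S.X₂.X i) (z1 : S.X₁.cycles j)
    (h3 : S.g.f i x2 = S.X₃.iCycles i z3)
    (h1 : S.f.f j (S.X₁.iCycles j z1) = S.X₂.d i j x2) :
    hS.δ i j hij (S.X₃.homologyπ i z3) = S.X₁.homologyπ j z1 := by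
  refine hS.δ_apply' i j hij (S.X₃.homologyπ i z3) (S.X₂.pOpcycles i x2) z1 ?_ ?_
  · change opcyclesMap S.g i (S.X₂.pOpcycles i x2) = S.X₃.homologyι i (S.X₃.homologyπ i z3)
    simp only [← ConcreteCategory.comp_apply, p_opcyclesMap, homology_π_ι]
    simp only [ConcreteCategory.comp_apply, h3]
  · change cyclesMap S.f j z1 = S.X₂.opcyclesToCycles i j (S.X₂.pOpcycles i x2)
    have hinj : Function.Injective (S.X₂.iCycles j) :=
      (ModuleCat.mono_iff_injective _).1 inferInstance
    apply hinj
    simp only [← ConcreteCategory.comp_apply, cyclesMap_i, Category.assoc,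
      pOpcycles_opcyclesToCycles_iCycles]
    simpa only [ConcreteCategory.comp_apply] using h1

lemma pi_surj (K : CochainComplex (ModuleCat.{v} R) ℤ) (i : ℤ) (x : K.homology i) :
    ∃ z : K.cycles i, K.homologyπ i z = x :=
  (ModuleCat.epi_iff_surjective _).1 inferInstance x

lemma pi_eq (K : CochainComplex (ModuleCat.{v} R) ℤ) (i j : ℤ)
    (hij : (ComplexShape.up ℤ).prev j = i)
    (z z' : K.cycles j) (h : K.homologyπ j z = K.homologyπ j z') :
    ∃ e : K.X i, z = z' + K.toCycles i j e := by
  have hex : (ShortComplex.mk _ _ (K.toCycles_comp_homologyπ i j)).Exact :=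
    ShortComplex.exact_of_g_is_cokernel _ (K.homologyIsCokernel i j hij)
  obtain ⟨e, he⟩ := (ShortComplex.moduleCat_exact_iff _).1 hex (z - z') (by
    change K.homologyπ j (z - z') = 0
    rw [map_sub, h, sub_self])
  refine ⟨e, ?_⟩
  change K.toCycles i j e = z - z' at he
  rw [he]; abel

lemma cyc_mk (K : CochainComplex (ModuleCat.{v} R) ℤ) (i j : ℤ)
    (hij : (ComplexShape.up ℤ).next i = j) (y : K.X i) (hy : K.d i j y = 0) :
    ∃ z : K.cycles i, K.iCycles i z = y := by
  have hex : (ShortComplex.mk _ _ (K.iCycles_d i j)).Exact :=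
    ShortComplex.exact_of_f_is_kernel _ (K.cyclesIsKernel i j hij)
  exact (ShortComplex.moduleCat_exact_iff _).1 hex y hy

end SqAux

/-- elementwise anticommutativity of the square
`h_B ∘ v_B⁻¹ ∘ h_D = −δ_K^v ∘ (δ_K^h)⁻¹ ∘ v_D` on `ker(H^m(D) → H^m(J))`: for every `[b]`
with `v_B[b] = h_D[x]` and every `[k]` with `δ_K^h[k] = v_D[x]`, the element
`h_B[b] + δ_K^v[k]` lies in the image of `δ_K^v ∘ h_J : H^{m−1}(J) → H^m(C)`. -/
theorem square_anticommutes
    {R : Type*} [CommRing R]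
    (A B C D E F G J K : CochainComplex (ModuleCat R) ℤ)
    (hAB : A ⟶ B) (hBC : B ⟶ C) (hDE : D ⟶ E) (hEF : E ⟶ F) (hGJ : G ⟶ J) (hJK : J ⟶ K)
    (vAD : A ⟶ D) (vDG : D ⟶ G) (vBE : B ⟶ E) (vEJ : E ⟶ J) (vCF : C ⟶ F) (vFK : F ⟶ K)
    (w₁ : hAB ≫ hBC = 0) (w₂ : hDE ≫ hEF = 0) (w₃ : hGJ ≫ hJK = 0)
    (w₄ : vAD ≫ vDG = 0) (w₅ : vBE ≫ vEJ = 0) (w₆ : vCF ≫ vFK = 0)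
    (row₁ : (ShortComplex.mk hAB hBC w₁).ShortExact)
    (row₂ : (ShortComplex.mk hDE hEF w₂).ShortExact)
    (row₃ : (ShortComplex.mk hGJ hJK w₃).ShortExact)
    (col₁ : (ShortComplex.mk vAD vDG w₄).ShortExact)
    (col₂ : (ShortComplex.mk vBE vEJ w₅).ShortExact)
    (col₃ : (ShortComplex.mk vCF vFK w₆).ShortExact)
    (sq₁ : hAB ≫ vBE = vAD ≫ hDE) (sq₂ : hBC ≫ vCF = vBE ≫ hEF)
    (sq₃ : hDE ≫ vEJ = vDG ≫ hGJ) (sq₄ : hEF ≫ vFK = vEJ ≫ hJK)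
    (m : ℤ) (x : D.homology m)
    (hx : homologyMap (vDG ≫ hGJ) m x = 0)
    (b : B.homology m) (hb : homologyMap vBE m b = homologyMap hDE m x)
    (k : K.homology (m - 1))
    (hk : row₃.δ (m - 1) m (by simp only [ComplexShape.up_Rel]; omega) k =
      homologyMap vDG m x) :
    ∃ j : J.homology (m - 1),
      homologyMap hBC m b +
          col₃.δ (m - 1) m (by simp only [ComplexShape.up_Rel]; omega) k =
        col₃.δ (m - 1) m (by simp only [ComplexShape.up_Rel]; omega)
          (homologyMap hJK (m - 1) j) := by
  have hrel : (ComplexShape.up ℤ).Rel (m - 1) m := by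
    simp only [ComplexShape.up_Rel]; omega
  have hprev : (ComplexShape.up ℤ).prev m = m - 1 := ComplexShape.prev_eq' _ hrel
  have hnext : (ComplexShape.up ℤ).next (m - 1) = m := ComplexShape.next_eq' _ hrel
  obtain ⟨zx, rfl⟩ := SqAux.pi_surj _ _ x
  obtain ⟨zb, rfl⟩ := SqAux.pi_surj _ _ b
  -- naturality of the class map
  have nat : ∀ {X Y : CochainComplex (ModuleCat R) ℤ} (φ : X ⟶ Y) (z : X.cycles m),
      homologyMap φ m (X.homologyπ m z) = Y.homologyπ m (cyclesMap φ m z) := by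
    intro X Y φ z
    simp only [← ConcreteCategory.comp_apply, homologyπ_naturality]
  have icyc : ∀ {X Y : CochainComplex (ModuleCat R) ℤ} (φ : X ⟶ Y) (z : X.cycles m),
      Y.iCycles m (cyclesMap φ m z) = φ.f m (X.iCycles m z) := by
    intro X Y φ z
    simp only [← ConcreteCategory.comp_apply, cyclesMap_i]
  have comm : ∀ {X Y : CochainComplex (ModuleCat R) ℤ} (φ : X ⟶ Y) (y : X.X (m - 1)),
      Y.d (m - 1) m (φ.f (m - 1) y) = φ.f m (X.d (m - 1) m y) := by
    intro X Y φ y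
    simp only [← ConcreteCategory.comp_apply, HomologicalComplex.Hom.comm]
  have sq : ∀ {X Y Z W : CochainComplex (ModuleCat R) ℤ} (f : X ⟶ Y) (g : Y ⟶ Z)
      (f' : X ⟶ W) (g' : W ⟶ Z) (_ : f ≫ g = f' ≫ g') (i : ℤ) (y : X.X i),
      g.f i (f.f i y) = g'.f i (f'.f i y) := by
    intro X Y Z W f g f' g' h i y
    simp only [← ConcreteCategory.comp_apply, ← HomologicalComplex.comp_f, h]
  have zz : ∀ {X Y Z : CochainComplex (ModuleCat R) ℤ} (f : X ⟶ Y) (g : Y ⟶ Z)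
      (_ : f ≫ g = 0) (i : ℤ) (y : X.X i), g.f i (f.f i y) = 0 := by
    intro X Y Z f g h i y
    rw [← ConcreteCategory.comp_apply, ← HomologicalComplex.comp_f, h]
    rfl
  rw [nat, nat] at hb
  obtain ⟨e, he⟩ := SqAux.pi_eq E (m - 1) m hprev _ _ hb
  have he' : vBE.f m (B.iCycles m zb) =
      hDE.f m (D.iCycles m zx) + E.d (m - 1) m e := by
    have := congrArg (E.iCycles m) he
    rw [map_add, icyc, icyc, ← ConcreteCategory.comp_apply (E.toCycles (m - 1) m),
      toCycles_i] at this
    exact this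
  have hde : E.d (m - 1) m e = vBE.f m (B.iCycles m zb) - hDE.f m (D.iCycles m zx) := by
    rw [he']; abel
  -- the cocycle `k' = hJK (-vEJ e)`
  have hdk : K.d (m - 1) m (hJK.f (m - 1) (vEJ.f (m - 1) (-e))) = 0 := by
    rw [comm, comm, map_neg, hde, neg_sub, map_sub, zz _ _ w₅, sub_zero, sq _ _ _ _ sq₃,
      zz _ _ w₃]
  obtain ⟨zk, hzk⟩ := SqAux.cyc_mk K (m - 1) m hnext _ hdk
  have h1 : row₃.δ (m - 1) m hrel (K.homologyπ (m - 1) zk) =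
      G.homologyπ m (cyclesMap vDG m zx) := by
    refine SqAux.delta_mod row₃ (m - 1) m hrel zk (vEJ.f (m - 1) (-e)) (cyclesMap vDG m zx)
      hzk.symm ?_
    change hGJ.f m (G.iCycles m (cyclesMap vDG m zx)) = J.d (m - 1) m (vEJ.f (m - 1) (-e))
    rw [icyc, comm, map_neg, hde, neg_sub, map_sub, zz _ _ w₅, sub_zero, sq _ _ _ _ sq₃]
  have h2 : col₃.δ (m - 1) m hrel (K.homologyπ (m - 1) zk) =
      C.homologyπ m (-cyclesMap hBC m zb) := by
    refine SqAux.delta_mod col₃ (m - 1) m hrel zk (hEF.f (m - 1) (-e)) (-cyclesMap hBC m zb)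
      ?_ ?_
    · change vFK.f (m - 1) (hEF.f (m - 1) (-e)) = K.iCycles (m - 1) zk
      rw [hzk, sq _ _ _ _ sq₄]
    · change vCF.f m (C.iCycles m (-cyclesMap hBC m zb)) =
        F.d (m - 1) m (hEF.f (m - 1) (-e))
      rw [map_neg, map_neg, icyc, comm, map_neg, map_neg, hde, map_sub, zz _ _ w₂, sub_zero,
        sq _ _ _ _ sq₂]
  obtain ⟨j, hj⟩ := (ShortComplex.moduleCat_exact_iff _).1
    (row₃.homology_exact₃ (m - 1) m hrel) (k - K.homologyπ (m - 1) zk) (by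
      change row₃.δ (m - 1) m hrel (k - K.homologyπ (m - 1) zk) = 0
      rw [map_sub, h1, hk, nat, sub_self])
  refine ⟨j, ?_⟩
  change homologyMap hJK (m - 1) j = _ at hj
  rw [hj, map_sub, h2, nat, map_neg]
  abel
end
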